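/- Let n ≥ 2 and let 𝓗^{>0} denote the set of n×n matrices of the form L·R where L = T₁(u)·T₂(u)⋯T_{n−1}(u) for some triangular array u = (u_i^j)_{1≤i≤j≤n−1} with all u_i^j > 0 and R ∈ 𝓑^{>0}. Then every X ∈ 𝓗^{>0} also admits a UL factorization X = R̃·L̃ with R̃ ∈ 𝓑^{>0} and L̃ = T₁(v)·T₂(v)⋯T_{n−1}(v) for some triangular array v of positive reals, and the backward discrete full Kostant–Toda map X = R̃·L̃ ↦ L̃·R̃ = L̃·X·L̃⁻¹ maps 𝓗^{>0} into itself; hence the discrete full Kostant–Toda dynamics extends to a well-defined dynamics on 𝓗^{>0} for all times t ∈ ℤ. -/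

import Mathlib

/-!
The whole argument rests on one subtraction-free local exchange. For `a, d₁, d₂ > 0`,

  `ℓ(a) · [d₁ 1; 0 d₂] = [e₁ 1; 0 e₂] · ℓ(b)`,
  `e₂ = d₂ + a`, `b = a d₁ / (d₂ + a)`, `e₁ = d₁ d₂ / (d₂ + a)`,

and conversely `d₁ = e₁ + b`, `a = e₂ b / (e₁ + b)`, `d₂ = e₁ e₂ / (e₁ + b)`. The relation lives in
rows and columns `k, k+1` of an `n × n` matrix and leaves the rest of a bidiagonal matrix
untouched (`elemL_mul_bidiag`), so a matrix of `𝓑^{>0}` can be moved through any `ℓ_k(a)`, `a > 0`,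
in either direction, the result being again a matrix of `𝓑^{>0}` and an `ℓ_k(b)` with `b > 0`.
Since `L(u)` is an ordered product of such factors, moving through them one at a time gives
`L(u) R = R' L(v)` (`Lmat_mul_exists`, the UL factorization) and `R L(u) = L(v) R'`
(`mul_Lmat_exists`, the forward step). Hence both maps preserve `𝓗^{>0}`, and iterating them
gives an orbit indexed by `ℤ`.
-/

open Matrix

/-- `ℓ_{k+1}(a)` (paper's 1-indexed `ℓ_i` with `i = k+1`): the identity matrix with
the entry `a` inserted in (0-indexed) position `(k+1, k)`. -/
def elemL (n : ℕ) (k : ℕ) (a : ℝ) : Matrix (Fin n) (Fin n) ℝ :=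
  fun p q => (if p = q then 1 else 0) + (if (p : ℕ) = k + 1 ∧ (q : ℕ) = k then a else 0)

/-- `T_i(u) = ℓ₁(u_1^i)·ℓ₂(u_2^{i+1})⋯ℓ_{n−i}(u_{n−i}^{n−1})`. -/
def Tmat (n : ℕ) (u : ℕ → ℕ → ℝ) (i : ℕ) : Matrix (Fin n) (Fin n) ℝ :=
  ((List.range (n - i)).map (fun j => elemL n j (u (j + 1) (i + j)))).prod

/-- `L(u) = T₁(u)·T₂(u)⋯T_{n−1}(u)`. -/
def Lmat (n : ℕ) (u : ℕ → ℕ → ℝ) : Matrix (Fin n) (Fin n) ℝ :=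
  ((List.range (n - 1)).map (fun i => Tmat n u (i + 1))).prod

/-- The triangular array `u` is positive on the index range `1 ≤ i ≤ j ≤ n−1`. -/
def PosTriangle (n : ℕ) (u : ℕ → ℕ → ℝ) : Prop :=
  ∀ i j, 1 ≤ i → i ≤ j → j ≤ n - 1 → 0 < u i j

/-- Upper bidiagonal matrices with ones on the superdiagonal (the set `𝓑`). -/
def IsUpperBidiagOne {n : ℕ} (M : Matrix (Fin n) (Fin n) ℝ) : Prop :=
  (∀ p q : Fin n, (p : ℕ) + 1 = (q : ℕ) → M p q = 1) ∧
  (∀ p q : Fin n, (p : ℕ) ≠ (q : ℕ) → (p : ℕ) + 1 ≠ (q : ℕ) → M p q = 0)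

/-- Members of `𝓑^{>0}`. -/
def IsBpos {n : ℕ} (M : Matrix (Fin n) (Fin n) ℝ) : Prop :=
  IsUpperBidiagOne M ∧ ∀ p : Fin n, 0 < M p p

/-- The totally positive Hessenberg matrices `𝓗^{>0} = N₋^{>0} × 𝓑^{>0}`. -/
def Hpos (n : ℕ) : Set (Matrix (Fin n) (Fin n) ℝ) :=
  {X | ∃ (u : ℕ → ℕ → ℝ) (R : Matrix (Fin n) (Fin n) ℝ),
    PosTriangle n u ∧ IsBpos R ∧ X = Lmat n u * R}

/-- The upper bidiagonal matrix with diagonal `d 0, …, d (n-1)` and ones on the superdiagonal. -/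
def bidiag (n : ℕ) (d : ℕ → ℝ) : Matrix (Fin n) (Fin n) ℝ :=
  fun p q => if (p : ℕ) = q then d p else if (p : ℕ) + 1 = q then 1 else 0

lemma isBpos_bidiag {n : ℕ} {d : ℕ → ℝ} (hd : ∀ k, k < n → 0 < d k) : IsBpos (bidiag n d) := by
  refine ⟨⟨fun p q h => ?_, fun p q h h' => ?_⟩, fun p => ?_⟩
  · have : (p : ℕ) ≠ q := by omega
    simp [bidiag, this, h]
  · simp [bidiag, h, h']
  · simpa [bidiag] using hd p p.2

lemma IsBpos.exists_bidiag {n : ℕ} {R : Matrix (Fin n) (Fin n) ℝ} (hR : IsBpos R) :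
    ∃ d : ℕ → ℝ, (∀ k, k < n → 0 < d k) ∧ R = bidiag n d := by
  obtain ⟨⟨h1, h0⟩, hpos⟩ := hR
  refine ⟨fun k => if h : k < n then R ⟨k, h⟩ ⟨k, h⟩ else 0, fun k hk => ?_, ?_⟩
  · simpa [hk] using hpos ⟨k, hk⟩
  · ext p q
    by_cases hpq : (p : ℕ) = q
    · have : p = q := Fin.ext hpq
      subst this
      simp [bidiag]
    · by_cases hpq' : (p : ℕ) + 1 = q
      · simp [bidiag, hpq, hpq', h1 p q hpq']
      · simp [bidiag, hpq, hpq', h0 p q hpq hpq']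

lemma elemL_eq {n k : ℕ} (hk : k + 1 < n) (a : ℝ) :
    elemL n k a = 1 + Matrix.single ⟨k + 1, hk⟩ ⟨k, by omega⟩ a := by
  ext p q
  simp only [elemL, Matrix.add_apply, Matrix.one_apply, Matrix.single_apply, Fin.ext_iff]
  congr 1
  simp only [eq_comm]

lemma elemL_mul_apply {n k : ℕ} (hk : k + 1 < n) (a : ℝ) (M : Matrix (Fin n) (Fin n) ℝ)
    (p q : Fin n) : (elemL n k a * M) p q =
      M p q + if (p : ℕ) = k + 1 then a * M ⟨k, by omega⟩ q else 0 := by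
  rw [elemL_eq hk, add_mul, one_mul, Matrix.add_apply]
  congr 1
  split_ifs with h
  · have : p = ⟨k + 1, hk⟩ := Fin.ext h
    subst this
    simp
  · exact Matrix.single_mul_apply_of_ne _ _ _ _ _ (fun h' => h (by rw [h'])) _

lemma mul_elemL_apply {n k : ℕ} (hk : k + 1 < n) (a : ℝ) (M : Matrix (Fin n) (Fin n) ℝ)
    (p q : Fin n) : (M * elemL n k a) p q =
      M p q + if (q : ℕ) = k then M p ⟨k + 1, hk⟩ * a else 0 := by
  rw [elemL_eq hk, mul_add, mul_one, Matrix.add_apply]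
  congr 1
  split_ifs with h
  · subst h
    simp
  · exact Matrix.mul_single_apply_of_ne _ _ _ _ _ (fun h' => h (by rw [h'])) _

/-- The local exchange relation, as polynomial identities between the parameters. -/
lemma elemL_mul_bidiag {n k : ℕ} (hk : k + 1 < n) {a b : ℝ} {d e : ℕ → ℝ}
    (h1 : d k = e k + b) (h2 : d (k + 1) + a = e (k + 1)) (h3 : a * d k = e (k + 1) * b)
    (h : ∀ j, j ≠ k → j ≠ k + 1 → d j = e j) :
    elemL n k a * bidiag n d = bidiag n e * elemL n k b := by
  ext p q
  rw [elemL_mul_apply hk, mul_elemL_apply hk]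
  obtain ⟨p, hp⟩ := p
  obtain ⟨q, hq⟩ := q
  simp only [bidiag]
  grind

/-- Moving a matrix of `𝓑^{>0}` leftwards through one elementary factor. -/
lemma elemL_mul_exists {n k : ℕ} (hk : k + 1 < n) {a : ℝ} (ha : 0 < a)
    {R : Matrix (Fin n) (Fin n) ℝ} (hR : IsBpos R) :
    ∃ b R', 0 < b ∧ IsBpos R' ∧ elemL n k a * R = R' * elemL n k b := by
  obtain ⟨d, hd, rfl⟩ := hR.exists_bidiag
  have h1 := hd k (by omega)
  have h2 := hd (k + 1) hk
  refine ⟨a * d k / (d (k + 1) + a),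
    bidiag n (fun j => if j = k then d k * d (k + 1) / (d (k + 1) + a)
      else if j = k + 1 then d (k + 1) + a else d j),
    by positivity, isBpos_bidiag fun j hj => ?_, elemL_mul_bidiag hk ?_ ?_ ?_ ?_⟩
  · split_ifs
    · positivity
    · positivity
    · exact hd j hj
  · simp; field_simp
  · simp
  · simp; field_simp
  · intro j hj hj'
    simp [hj, hj']

/-- Moving a matrix of `𝓑^{>0}` rightwards through one elementary factor. -/
lemma mul_elemL_exists {n k : ℕ} (hk : k + 1 < n) {b : ℝ} (hb : 0 < b)
    {R : Matrix (Fin n) (Fin n) ℝ} (hR : IsBpos R) :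
    ∃ a R', 0 < a ∧ IsBpos R' ∧ R * elemL n k b = elemL n k a * R' := by
  obtain ⟨e, he, rfl⟩ := hR.exists_bidiag
  have h1 := he k (by omega)
  have h2 := he (k + 1) hk
  refine ⟨e (k + 1) * b / (e k + b),
    bidiag n (fun j => if j = k then e k + b
      else if j = k + 1 then e k * e (k + 1) / (e k + b) else e j),
    by positivity, isBpos_bidiag fun j hj => ?_, (elemL_mul_bidiag hk ?_ ?_ ?_ ?_).symm⟩
  · split_ifs
    · positivity
    · positivity
    · exact he j hj
  · simp
  · simp; field_simp
  · simp; field_simp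
  · intro j hj hj'
    simp [hj, hj']

/-- If elements of `S` move leftwards through each factor `f j x` with parameter `x` in `P j`, they
move leftwards through an ordered product of such factors. -/
lemma prod_mul_exists {M α : Type*} [Monoid M] (S : M → Prop) (f : ℕ → α → M) (P : ℕ → α → Prop)
    (m : ℕ) (hf : ∀ j < m, ∀ x, P j x → ∀ R, S R → ∃ y R', P j y ∧ S R' ∧ f j x * R = R' * f j y)
    (x : ℕ → α) (hx : ∀ j < m, P j (x j)) (R : M) (hR : S R) :
    ∃ (y : ℕ → α) (R' : M), (∀ j < m, P j (y j)) ∧ S R' ∧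
      ((List.range m).map fun j => f j (x j)).prod * R =
        R' * ((List.range m).map fun j => f j (y j)).prod := by
  induction m generalizing R with
  | zero => exact ⟨x, R, by simp, hR, by simp⟩
  | succ m ih =>
    obtain ⟨y₀, R₁, hy₀, hR₁, h₁⟩ := hf m (by omega) (x m) (hx m (by omega)) R hR
    obtain ⟨y, R', hy, hR', h⟩ :=
      ih (fun j hj => hf j (by omega)) (fun j hj => hx j (by omega)) R₁ hR₁
    refine ⟨fun j => if j = m then y₀ else y j, R', fun j hj => ?_, hR', ?_⟩
    · dsimp only
      split_ifs with hjm
      · exact hjm ▸ hy₀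
      · exact hy j (by omega)
    · have e : (List.range m).map (fun j => f j (if j = m then y₀ else y j)) =
          (List.range m).map (fun j => f j (y j)) :=
        List.map_congr_left fun j hj => by
          rw [if_neg (List.mem_range.1 hj).ne]
      simp only [List.range_succ, List.map_append, List.prod_append, e, List.map_cons,
        List.map_nil, List.prod_cons, List.prod_nil, mul_one, if_true]
      rw [mul_assoc, h₁, ← mul_assoc, h, mul_assoc]

/-- Mirror image of `prod_mul_exists`, with elements of `S` moving rightwards. -/
lemma mul_prod_exists {M α : Type*} [Monoid M] (S : M → Prop) (f : ℕ → α → M) (P : ℕ → α → Prop)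
    (m : ℕ) (hf : ∀ j < m, ∀ x, P j x → ∀ R, S R → ∃ y R', P j y ∧ S R' ∧ R * f j x = f j y * R')
    (x : ℕ → α) (hx : ∀ j < m, P j (x j)) (R : M) (hR : S R) :
    ∃ (y : ℕ → α) (R' : M), (∀ j < m, P j (y j)) ∧ S R' ∧
      R * ((List.range m).map fun j => f j (x j)).prod =
        ((List.range m).map fun j => f j (y j)).prod * R' := by
  induction m with
  | zero => exact ⟨x, R, by simp, hR, by simp⟩
  | succ m ih =>
    obtain ⟨y, R₁, hy, hR₁, h⟩ := ih (fun j hj => hf j (by omega)) (fun j hj => hx j (by omega))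
    obtain ⟨y₀, R', hy₀, hR', h₁⟩ := hf m (by omega) (x m) (hx m (by omega)) R₁ hR₁
    refine ⟨fun j => if j = m then y₀ else y j, R', fun j hj => ?_, hR', ?_⟩
    · dsimp only
      split_ifs with hjm
      · exact hjm ▸ hy₀
      · exact hy j (by omega)
    · have e : (List.range m).map (fun j => f j (if j = m then y₀ else y j)) =
          (List.range m).map (fun j => f j (y j)) :=
        List.map_congr_left fun j hj => by
          rw [if_neg (List.mem_range.1 hj).ne]
      simp only [List.range_succ, List.map_append, List.prod_append, e, List.map_cons,
        List.map_nil, List.prod_cons, List.prod_nil, mul_one, if_true]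
      rw [← mul_assoc, h, mul_assoc, h₁, mul_assoc]

/-- The factor `T_{i+1}`, as a function of its own row of parameters `w j = u_{j+1}^{i+1+j}`. -/
def rowProd (n i : ℕ) (w : ℕ → ℝ) : Matrix (Fin n) (Fin n) ℝ :=
  ((List.range (n - (i + 1))).map fun j => elemL n j (w j)).prod

lemma Lmat_eq (n : ℕ) (u : ℕ → ℕ → ℝ) :
    Lmat n u = ((List.range (n - 1)).map
      fun i => rowProd n i (fun j => u (j + 1) (i + 1 + j))).prod := rfl

/-- Every family of rows comes from a triangular array, read off by `u_p^q = w_{q-p} (p-1)`. -/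
lemma exists_array {n : ℕ} (w : ℕ → ℕ → ℝ)
    (hw : ∀ i < n - 1, ∀ j < n - (i + 1), 0 < w i j) :
    ∃ v, PosTriangle n v ∧
      Lmat n v = ((List.range (n - 1)).map fun i => rowProd n i (w i)).prod := by
  refine ⟨fun p q => w (q - p) (p - 1), fun p q h1 h2 h3 => hw _ (by omega) _ (by omega), ?_⟩
  rw [Lmat_eq]
  have e : ∀ i j : ℕ, i + 1 + j - (j + 1) = i := fun i j => by omega
  simp only [e, Nat.add_sub_cancel]

/-- Moving a matrix of `𝓑^{>0}` leftwards through `L(u)`: an LU factorization becomes a UL one. -/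
lemma Lmat_mul_exists {n : ℕ} {u : ℕ → ℕ → ℝ} (hu : PosTriangle n u)
    {R : Matrix (Fin n) (Fin n) ℝ} (hR : IsBpos R) :
    ∃ v R', PosTriangle n v ∧ IsBpos R' ∧ Lmat n u * R = R' * Lmat n v := by
  obtain ⟨w, R', hw, hR', h⟩ := prod_mul_exists IsBpos (rowProd n)
    (fun i w => ∀ j < n - (i + 1), 0 < w j) (n - 1)
    (fun i _ w hw R hR => prod_mul_exists IsBpos (elemL n) (fun _ a => 0 < a) (n - (i + 1))
      (fun k hk a ha R hR => elemL_mul_exists (by omega) ha hR) w hw R hR)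
    (fun i j => u (j + 1) (i + 1 + j))
    (fun i hi j hj => hu _ _ (by omega) (by omega) (by omega)) R hR
  obtain ⟨v, hv, hvw⟩ := exists_array w hw
  exact ⟨v, R', hv, hR', by rw [Lmat_eq n u, h, hvw]⟩

/-- Moving a matrix of `𝓑^{>0}` rightwards through `L(u)`: a UL factorization becomes an LU one. -/
lemma mul_Lmat_exists {n : ℕ} {u : ℕ → ℕ → ℝ} (hu : PosTriangle n u)
    {R : Matrix (Fin n) (Fin n) ℝ} (hR : IsBpos R) :
    ∃ v R', PosTriangle n v ∧ IsBpos R' ∧ R * Lmat n u = Lmat n v * R' := by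
  obtain ⟨w, R', hw, hR', h⟩ := mul_prod_exists IsBpos (rowProd n)
    (fun i w => ∀ j < n - (i + 1), 0 < w j) (n - 1)
    (fun i _ w hw R hR => mul_prod_exists IsBpos (elemL n) (fun _ a => 0 < a) (n - (i + 1))
      (fun k hk a ha R hR => mul_elemL_exists (by omega) ha hR) w hw R hR)
    (fun i j => u (j + 1) (i + 1 + j))
    (fun i hi j hj => hu _ _ (by omega) (by omega) (by omega)) R hR
  obtain ⟨v, hv, hvw⟩ := exists_array w hw
  exact ⟨v, R', hv, hR', by rw [Lmat_eq n u, h, hvw]⟩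

lemma isUnit_elemL {n k : ℕ} (hk : k + 1 < n) (a : ℝ) : IsUnit (elemL n k a) := by
  have h : ∀ c : ℝ, elemL n k c * elemL n k (-c) = 1 := fun c => by
    rw [elemL_eq hk, elemL_eq hk, add_mul, one_mul, mul_add, mul_one,
      Matrix.single_mul_single_of_ne _ _ _ _ (by simp [Fin.ext_iff]), add_zero, add_assoc,
      ← Matrix.single_add]
    simp
  exact ⟨⟨_, _, h a, by simpa using h (-a)⟩, rfl⟩

lemma isUnit_Lmat (n : ℕ) (u : ℕ → ℕ → ℝ) : IsUnit (Lmat n u) := by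
  refine List.prod_isUnit fun m hm => ?_
  obtain ⟨i, hi, rfl⟩ := List.mem_map.1 hm
  refine List.prod_isUnit fun m hm => ?_
  obtain ⟨j, hj, rfl⟩ := List.mem_map.1 hm
  rw [List.mem_range] at hj
  exact isUnit_elemL (by omega) _

/-- A relation in which every point has a successor and a predecessor has a bi-infinite orbit
through each point. -/
lemma exists_int_orbit {α : Type*} (r : α → α → Prop) (hs : ∀ x, ∃ y, r x y)
    (hp : ∀ x, ∃ y, r y x) (x₀ : α) : ∃ Y : ℤ → α, Y 0 = x₀ ∧ ∀ t, r (Y t) (Y (t + 1)) := by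
  choose f hf using hs
  choose g hg using hp
  refine ⟨fun t => Int.rec (fun k => f^[k] x₀) (fun k => g^[k + 1] x₀) t, rfl, fun t => ?_⟩
  obtain k | k := t
  · change r (f^[k] x₀) (f^[k + 1] x₀)
    rw [Function.iterate_succ_apply']
    exact hf _
  · obtain _ | k := k
    · exact hg x₀
    · change r (g^[k + 1 + 1] x₀) (g^[k + 1] x₀)
      rw [Function.iterate_succ_apply' g (k + 1)]
      exact hg _

/-- UL factorization and the backward discrete full Kostant–Toda map on
`𝓗^{>0}`; the dynamics extends to all times `t ∈ ℤ`. -/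
theorem statement10 (n : ℕ) (hn : 2 ≤ n) :
    -- every `X ∈ 𝓗^{>0}` admits a UL factorization, and the backward map
    -- `X = R̃·L̃ ↦ L̃·R̃ = L̃·X·L̃⁻¹` sends `𝓗^{>0}` into itself
    (∀ X ∈ Hpos n, ∃ (v : ℕ → ℕ → ℝ) (Rt : Matrix (Fin n) (Fin n) ℝ),
      PosTriangle n v ∧ IsBpos Rt ∧ X = Rt * Lmat n v ∧
      Lmat n v * Rt = Lmat n v * X * (Lmat n v)⁻¹ ∧
      Lmat n v * Rt ∈ Hpos n) ∧
    -- the discrete full Kostant–Toda dynamics is well defined for all `t ∈ ℤ`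
    (∀ X₀ ∈ Hpos n, ∃ Y : ℤ → Matrix (Fin n) (Fin n) ℝ, Y 0 = X₀ ∧
      ∀ t : ℤ, Y t ∈ Hpos n ∧
        ∃ (u : ℕ → ℕ → ℝ) (R : Matrix (Fin n) (Fin n) ℝ),
          PosTriangle n u ∧ IsBpos R ∧ Y t = Lmat n u * R ∧ Y (t + 1) = R * Lmat n u) := by
  refine ⟨?_, fun X₀ hX₀ => ?_⟩
  · rintro X ⟨u, R, hu, hR, rfl⟩
    obtain ⟨v, R', hv, hR', h⟩ := Lmat_mul_exists hu hR
    refine ⟨v, R', hv, hR', h, ?_, v, R', hv, hR', rfl⟩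
    rw [h, ← mul_assoc, Matrix.mul_nonsing_inv_cancel_right _ _
      ((Matrix.isUnit_iff_isUnit_det _).1 (isUnit_Lmat n v))]
  · obtain ⟨Y, hY₀, hY⟩ := exists_int_orbit
      (fun X X' : Hpos n => ∃ (u : ℕ → ℕ → ℝ) (R : Matrix (Fin n) (Fin n) ℝ),
        PosTriangle n u ∧ IsBpos R ∧ X.1 = Lmat n u * R ∧ X'.1 = R * Lmat n u)
      (by
        rintro ⟨X, u, R, hu, hR, rfl⟩
        obtain ⟨v, R', hv, hR', h⟩ := mul_Lmat_exists hu hR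
        exact ⟨⟨R * Lmat n u, v, R', hv, hR', h⟩, u, R, hu, hR, rfl, rfl⟩)
      (by
        rintro ⟨X, u, R, hu, hR, rfl⟩
        obtain ⟨v, R', hv, hR', h⟩ := Lmat_mul_exists hu hR
        exact ⟨⟨Lmat n v * R', v, R', hv, hR', rfl⟩, v, R', hv, hR', rfl, h⟩)
      ⟨X₀, hX₀⟩
    exact ⟨fun t => (Y t).1, by simp [hY₀], fun t => ⟨(Y t).2, hY t⟩⟩
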